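/- For every t > 0 and every x = (x₁,x₂,a) ∈ G with x ≠ e, the derivative of the heat kernel along X₀ satisfies X₀ p_t(x) = p_t(x) · ( a/(r sinh r) − cosh r/(r sinh r) − a cosh r/sinh² r + 1/sinh² r + (r/(2t)) · (cosh r − a)/sinh r ), where r = r(x). -/

import Mathlib

open MeasureTheory Real Filter Set
open scoped ENNReal

noncomputable section

/-- The group `G = ℝ² ⋊ ℝ⁺`, realized as triples `(x₁, x₂, a)` (only `a > 0` is relevant). -/
abbrev G : Type := ℝ × ℝ × ℝ

/-- Group product `(x₁,x₂,a)·(x₁',x₂',a') = (x₁+a x₁', x₂+a x₂', a a')`. -/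
def gMul (x y : G) : G := (x.1 + x.2.2 * y.1, x.2.1 + x.2.2 * y.2.1, x.2.2 * y.2.2)

/-- Group inverse `(x₁,x₂,a)⁻¹ = (−x₁/a, −x₂/a, 1/a)`. -/
def gInv (x : G) : G := (-x.1 / x.2.2, -x.2.1 / x.2.2, 1 / x.2.2)

/-- The identity `e = (0,0,1)`. -/
def gE : G := (0, 0, 1)

/-- The right Haar measure `dρ = a⁻¹ dx₁ dx₂ da` (supported where `a > 0`). -/
def ρG : Measure G :=
  (volume : Measure G).withDensity fun x => ENNReal.ofReal (if 0 < x.2.2 then x.2.2⁻¹ else 0)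

/-- The modular function `δ(x₁,x₂,a) = a⁻²`. -/
def deltaG (x : G) : ℝ := (x.2.2 ^ 2)⁻¹

/-- `|x| = √(x₁² + x₂²)`. -/
def normG (x : G) : ℝ := Real.sqrt (x.1 ^ 2 + x.2.1 ^ 2)

/-- `cosh r(x) = (a + a⁻¹ + a⁻¹|x|²)/2`. -/
def coshArg (x : G) : ℝ := (x.2.2 + x.2.2⁻¹ + x.2.2⁻¹ * (x.1 ^ 2 + x.2.1 ^ 2)) / 2

/-- `r(x) ≥ 0` is determined by `cosh r(x) = coshArg x`; explicitly `r = arcosh (coshArg x)`. -/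
def rG (x : G) : ℝ := Real.log (coshArg x + Real.sqrt (coshArg x ^ 2 - 1))

/-- The left-invariant distance `d(x,y) = r(x⁻¹y)`. -/
def dG (x y : G) : ℝ := rG (gMul (gInv x) y)

/-- The heat kernel
`p_t(x) = (8π^{3/2})⁻¹ δ(x)^{1/2} (r(x)/sinh r(x)) t^{−3/2} exp(−r(x)²/(4t))`,
with `r/sinh r := 1` at `x = e`. -/
def heatK (t : ℝ) (x : G) : ℝ :=
  (8 * Real.pi ^ ((3 : ℝ)/2))⁻¹ * Real.sqrt (deltaG x) *
    (if rG x = 0 then 1 else rG x / Real.sinh (rG x)) *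
    t ^ (-(3 : ℝ)/2) * Real.exp (-(rG x ^ 2) / (4 * t))

/-- Convolution `f ∗ p_t(x) = ∫ f(xy⁻¹) p_t(y) dρ(y)`. -/
def convHeat (f : G → ℝ) (t : ℝ) (x : G) : ℝ := ∫ y, f (gMul x (gInv y)) * heatK t y ∂ρG

/-- The heat maximal operator `Mf(x) = sup_{t>0} |f ∗ p_t(x)|` (valued in `ℝ≥0∞`). -/
def maxHeat (f : G → ℝ) (x : G) : ℝ≥0∞ :=
  ⨆ (t : ℝ) (_ : 0 < t), ENNReal.ofReal |convHeat f t x|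

/-- Calderón–Zygmund sets. -/
def IsCZ (R : Set G) : Prop :=
  ∃ c : G, ∃ L r : ℝ, 0 < c.2.2 ∧ 0 < L ∧ 0 < r ∧
    R = Set.Icc (c.1 - L/2) (c.1 + L/2) ×ˢ
        (Set.Icc (c.2.1 - L/2) (c.2.1 + L/2) ×ˢ
         Set.Icc (c.2.2 * Real.exp (-r)) (c.2.2 * Real.exp r)) ∧
    (r < 1 → Real.exp 2 * c.2.2 * r ≤ L ∧ L < Real.exp 8 * c.2.2 * r) ∧
    (1 ≤ r → c.2.2 * Real.exp (2*r) ≤ L ∧ L < c.2.2 * Real.exp (8*r))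

/-- Atoms: `A ∈ L¹(ρ)` supported in a Calderón–Zygmund set `R`, with
`‖A‖_∞ ≤ ρ(R)⁻¹` and `∫ A dρ = 0`. -/
def IsAtomG (A : G → ℝ) : Prop :=
  Integrable A ρG ∧
  ∃ R : Set G, IsCZ R ∧ (∀ x ∉ R, A x = 0) ∧
    eLpNorm A ⊤ ρG ≤ (ρG R)⁻¹ ∧
    ∫ x, A x ∂ρG = 0

/-- `f = Σ_j lam_j A_j` with atoms `A_j`, `Σ_j |lam_j| < ∞`, converging in `L¹(ρ)`. -/
def IsH1Decomp (f : G → ℝ) (lam : ℕ → ℝ) (A : ℕ → G → ℝ) : Prop :=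
  (∀ j, IsAtomG (A j)) ∧ Summable (fun j => |lam j|) ∧
  Tendsto (fun N => eLpNorm (fun x => f x - ∑ j ∈ Finset.range N, lam j * A j x) 1 ρG)
    atTop (nhds 0)

/-- The Hardy space `H¹`. -/
def MemH1 (f : G → ℝ) : Prop :=
  Integrable f ρG ∧ ∃ lam A, IsH1Decomp f lam A

/-- `‖f‖_{H¹} = inf Σ_j |lam_j|` over all atomic decompositions. -/
def H1norm (f : G → ℝ) : ℝ :=
  sInf {s | ∃ lam A, IsH1Decomp f lam A ∧ s = ∑' j, |lam j|}

/-- The left-invariant vector field `X₀ = a ∂_a`. -/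
def X0 (f : G → ℝ) (x : G) : ℝ := x.2.2 * deriv (fun s => f (x.1, x.2.1, s)) x.2.2

/-- The left-invariant vector field `X₁ = a ∂_{x₁}`. -/
def X1 (f : G → ℝ) (x : G) : ℝ := x.2.2 * deriv (fun s => f (s, x.2.1, x.2.2)) x.1

/-- The left-invariant vector field `X₂ = a ∂_{x₂}`. -/
def X2 (f : G → ℝ) (x : G) : ℝ := x.2.2 * deriv (fun s => f (x.1, s, x.2.2)) x.2.1

/-- `‖∇p_t(x)‖`, the Euclidean norm of `(X₀p_t, X₁p_t, X₂p_t)` at `x`. -/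
def gradHeatNorm (t : ℝ) (x : G) : ℝ :=
  Real.sqrt (X0 (heatK t) x ^ 2 + X1 (heatK t) x ^ 2 + X2 (heatK t) x ^ 2)

/-- The Poisson kernel `q_t(x) = π⁻² δ(x)^{1/2} (r(x)/sinh r(x)) · t/(t²+r(x)²)²`. -/
def poissonK (t : ℝ) (x : G) : ℝ :=
  (Real.pi ^ 2)⁻¹ * Real.sqrt (deltaG x) *
    (if rG x = 0 then 1 else rG x / Real.sinh (rG x)) *
    (t / (t ^ 2 + rG x ^ 2) ^ 2)

/-- Convolution `f ∗ q_t(x) = ∫ f(xy⁻¹) q_t(y) dρ(y)`. -/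
def convPoisson (f : G → ℝ) (t : ℝ) (x : G) : ℝ := ∫ y, f (gMul x (gInv y)) * poissonK t y ∂ρG

/-- The Poisson maximal operator `M̃f(x) = sup_{t>0} |f ∗ q_t(x)|`. -/
def maxPoisson (f : G → ℝ) (x : G) : ℝ≥0∞ :=
  ⨆ (t : ℝ) (_ : 0 < t), ENNReal.ofReal |convPoisson f t x|

/-- `G_{r₁}(x) = sup_{z ∈ B(x,r₁/2)} sup_{t>0} ‖∇p_t(z)‖`. -/
def Gsup (r1 : ℝ) (x : G) : ℝ≥0∞ :=
  ⨆ (z : G) (_ : 0 < z.2.2 ∧ dG x z < r1 / 2) (t : ℝ) (_ : 0 < t),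
    ENNReal.ofReal (gradHeatNorm t z)

/-- `R₀ = [−1,1]×[−1,1]×[e⁻¹,e]`. -/
def R0set : Set G :=
  Set.Icc (-1 : ℝ) 1 ×ˢ (Set.Icc (-1 : ℝ) 1 ×ˢ Set.Icc (Real.exp (-1)) (Real.exp 1))

/-- `R_L = [L−1,L+1]×[−1,1]×[e⁻¹,e]`. -/
def RLset (L : ℝ) : Set G :=
  Set.Icc (L - 1) (L + 1) ×ˢ (Set.Icc (-1 : ℝ) 1 ×ˢ Set.Icc (Real.exp (-1)) (Real.exp 1))

/-- `f_L = χ_{R_L} − χ_{R₀}`. -/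
def fL (L : ℝ) : G → ℝ := fun x =>
  (RLset L).indicator (fun _ => (1 : ℝ)) x - R0set.indicator (fun _ => (1 : ℝ)) x

/-- The mean of `g` over `R` with respect to `ρ`. -/
def czMean (g : G → ℝ) (R : Set G) : ℝ := (∫ x in R, g x ∂ρG) / (ρG R).toReal

/-- `‖g‖_{BMO} = sup_R ρ(R)⁻¹ ∫_R |g − g_R| dρ` over Calderón–Zygmund sets `R`. -/
def czBMO (g : G → ℝ) : ℝ≥0∞ :=
  ⨆ (R : Set G) (_ : IsCZ R),
    (ρG R)⁻¹ * ∫⁻ x in R, ENNReal.ofReal |g x - czMean g R| ∂ρG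

/-- `‖h‖_{BMO(ℝ)} = sup_Q |Q|⁻¹ ∫_Q |h − h_Q|` over bounded intervals `Q ⊂ ℝ`. -/
def lineBMO (h : ℝ → ℝ) : ℝ≥0∞ :=
  ⨆ (a : ℝ) (b : ℝ) (_ : a < b),
    (ENNReal.ofReal (b - a))⁻¹ *
      ∫⁻ s in Set.Icc a b, ENNReal.ofReal |h s - (∫ u in Set.Icc a b, h u) / (b - a)|

/-- `2R₀ = [−2,2]×[−2,2]×[e⁻²,e²]`. -/
def twoR0set : Set G :=
  Set.Icc (-2 : ℝ) 2 ×ˢ (Set.Icc (-2 : ℝ) 2 ×ˢ Set.Icc (Real.exp (-2)) (Real.exp 2))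

/-- The set `{x₁ > 3, |x₂| < 1, e⁻¹ < a < e}`. -/
def domSpecial : Set G :=
  {x : G | 3 < x.1 ∧ |x.2.1| < 1 ∧ Real.exp (-1) < x.2.2 ∧ x.2.2 < Real.exp 1}

/-- The function equal to `1/(x₁ (log x₁)^{3/2})` on `{x₁ > 3, |x₂| < 1, e⁻¹ < a < e}`,
to `c₀` on `R₀`, and `0` elsewhere. -/
def fSpecial (c0 : ℝ) : G → ℝ := fun x =>
  domSpecial.indicator (fun y => (y.1 * Real.log y.1 ^ ((3 : ℝ)/2))⁻¹) x
    + R0set.indicator (fun _ => c0) x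

/-!
Up to the factor `δ^{1/2} = a⁻¹`, the heat kernel is a function of `r` alone. Differentiating
`cosh r = (a + a⁻¹ + a⁻¹|x|²) / 2` gives `X₀ r = (a - cosh r) / sinh r`, while
`X₀ δ^{1/2} = -δ^{1/2}`; hence for a radial profile `φ`
`X₀ (δ^{1/2} φ(r)) = δ^{1/2} (φ'(r) (a - cosh r) / sinh r - φ(r))`.
For the heat kernel `φ' / φ = 1 / r - coth r - r / (2t)`, and the formula follows on expanding the
product and using `coth² r - 1 = 1 / sinh² r`.
-/

theorem coshArg_sub_one {x : G} (ha : x.2.2 ≠ 0) :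
    coshArg x - 1 = ((x.2.2 - 1) ^ 2 + x.1 ^ 2 + x.2.1 ^ 2) / (2 * x.2.2) := by
  simp only [coshArg]
  field_simp
  ring

theorem one_lt_coshArg {x : G} (ha : 0 < x.2.2) (hx : x ≠ gE) : 1 < coshArg x := by
  have sum_sq_pos : 0 < (x.2.2 - 1) ^ 2 + x.1 ^ 2 + x.2.1 ^ 2 := by
    refine lt_of_le_of_ne (by positivity) fun sum_sq_eq_zero => hx ?_
    have fst_eq : x.1 = 0 := by nlinarith
    have snd_eq : x.2.1 = 0 := by nlinarith
    have height_eq : x.2.2 = 1 := by nlinarith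
    exact Prod.ext fst_eq (Prod.ext snd_eq height_eq)
  rw [← sub_pos, coshArg_sub_one ha.ne']
  positivity

theorem rG_eq_arcosh (x : G) : rG x = arcosh (coshArg x) := rfl

theorem cosh_rG {x : G} (h : 1 ≤ coshArg x) : cosh (rG x) = coshArg x := by
  rw [rG_eq_arcosh, cosh_arcosh h]

theorem sinh_rG {x : G} (h : 1 ≤ coshArg x) : sinh (rG x) = √(coshArg x ^ 2 - 1) := by
  rw [rG_eq_arcosh, sinh_arcosh h]

theorem rG_pos {x : G} (ha : 0 < x.2.2) (hx : x ≠ gE) : 0 < rG x := by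
  rw [rG_eq_arcosh]
  exact arcosh_pos (one_lt_coshArg ha hx)

theorem hasDerivAt_coshArg {x : G} (ha : x.2.2 ≠ 0) :
    HasDerivAt (fun s => coshArg (x.1, x.2.1, s)) ((x.2.2 - coshArg x) / x.2.2) x.2.2 := by
  have inv_deriv := hasDerivAt_inv ha
  refine ((((hasDerivAt_id' x.2.2).fun_add inv_deriv).fun_add
    (inv_deriv.mul_const (x.1 ^ 2 + x.2.1 ^ 2))).div_const 2).congr_deriv ?_
  simp only [coshArg]
  field_simp
  ring

theorem hasDerivAt_rG {x : G} (ha : 0 < x.2.2) (hx : x ≠ gE) :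
    HasDerivAt (fun s => rG (x.1, x.2.1, s))
      ((x.2.2 - cosh (rG x)) / sinh (rG x) / x.2.2) x.2.2 := by
  have one_lt := one_lt_coshArg ha hx
  refine ((hasDerivAt_arcosh one_lt).comp x.2.2 (hasDerivAt_coshArg ha.ne')).congr_deriv ?_
  rw [cosh_rG one_lt.le, sinh_rG one_lt.le]
  ring

theorem hasDerivAt_sqrt_deltaG {x : G} (ha : x.2.2 ≠ 0) :
    HasDerivAt (fun s => √(deltaG (x.1, x.2.1, s))) (-√(deltaG x) / x.2.2) x.2.2 := by
  have delta_deriv : HasDerivAt (fun s => deltaG (x.1, x.2.1, s))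
      (-2 * deltaG x / x.2.2) x.2.2 := by
    refine ((hasDerivAt_pow 2 x.2.2).fun_inv (pow_ne_zero 2 ha)).congr_deriv ?_
    simp only [deltaG]
    field_simp
    norm_num [mul_comm]
  have delta_pos : 0 < deltaG x := inv_pos.mpr (by positivity)
  refine (delta_deriv.sqrt delta_pos.ne').congr_deriv ?_
  have sqrt_ne_zero : √(deltaG x) ≠ 0 := (sqrt_pos.mpr delta_pos).ne'
  field_simp
  rw [sq_sqrt delta_pos.le]

theorem X0_sqrt_deltaG_mul_comp_rG {φ : ℝ → ℝ} {φ' : ℝ} {x : G} (ha : 0 < x.2.2)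
    (hx : x ≠ gE) (hφ : HasDerivAt φ φ' (rG x)) :
    X0 (fun y => √(deltaG y) * φ (rG y)) x =
      √(deltaG x) * (φ' * ((x.2.2 - cosh (rG x)) / sinh (rG x)) - φ (rG x)) := by
  have product_deriv := (hasDerivAt_sqrt_deltaG ha.ne').fun_mul
    (hφ.comp x.2.2 (hasDerivAt_rG ha hx))
  calc X0 (fun y => √(deltaG y) * φ (rG y)) x
      = x.2.2 * (-√(deltaG x) / x.2.2 * φ (rG x) +
          √(deltaG x) * (φ' * ((x.2.2 - cosh (rG x)) / sinh (rG x) / x.2.2))) :=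
        congrArg (x.2.2 * ·) product_deriv.deriv
    _ = _ := by
        field_simp
        ring

/-- The radial profile of the heat kernel: `p_t(x) = δ(x)^{1/2} * heatProfile t (r(x))`. The
factor `r / sinh r` is given its limiting value `1` at `r = 0`. -/
def heatProfile (t r : ℝ) : ℝ :=
  (8 * π ^ ((3 : ℝ) / 2))⁻¹ * (if r = 0 then 1 else r / sinh r) *
    t ^ (-(3 : ℝ) / 2) * exp (-(r ^ 2) / (4 * t))

theorem heatK_eq_sqrt_deltaG_mul_heatProfile (t : ℝ) :
    heatK t = fun x => √(deltaG x) * heatProfile t (rG x) := by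
  funext x
  simp only [heatK, heatProfile]
  ring

theorem hasDerivAt_div_sinh {r : ℝ} (hr : r ≠ 0) :
    HasDerivAt (fun s => s / sinh s) (r / sinh r * (1 / r - cosh r / sinh r)) r := by
  have sinh_r_ne_zero : sinh r ≠ 0 := sinh_ne_zero.mpr hr
  refine ((hasDerivAt_id' r).fun_div (hasDerivAt_sinh r) sinh_r_ne_zero).congr_deriv ?_
  field_simp

theorem hasDerivAt_heatProfile (t : ℝ) {r : ℝ} (hr : r ≠ 0) :
    HasDerivAt (heatProfile t)
      (heatProfile t r * (1 / r - cosh r / sinh r - r / (2 * t))) r := by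
  have away_from_zero : heatProfile t =ᶠ[nhds r] fun s =>
      (8 * π ^ ((3 : ℝ) / 2))⁻¹ * (s / sinh s) * t ^ (-(3 : ℝ) / 2) *
        exp (-(s ^ 2) / (4 * t)) := by
    filter_upwards [eventually_ne_nhds hr] with s hs
    simp only [heatProfile, if_neg hs]
  have gaussian_deriv : HasDerivAt (fun s => exp (-(s ^ 2) / (4 * t)))
      (exp (-(r ^ 2) / (4 * t)) * -(r / (2 * t))) r := by
    refine ((hasDerivAt_pow 2 r).fun_neg.div_const (4 * t)).exp.congr_deriv ?_
    push_cast
    ring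
  refine (((((hasDerivAt_div_sinh hr).const_mul _).mul_const _).fun_mul
    gaussian_deriv).congr_of_eventuallyEq away_from_zero).congr_deriv ?_
  simp only [heatProfile, if_neg hr]
  ring

theorem X0_heatK (t : ℝ) (ht : 0 < t) (x : G) (ha : 0 < x.2.2) (hx : x ≠ gE) :
    X0 (heatK t) x = heatK t x *
      (x.2.2 / (rG x * Real.sinh (rG x)) - Real.cosh (rG x) / (rG x * Real.sinh (rG x))
        - x.2.2 * Real.cosh (rG x) / Real.sinh (rG x) ^ 2 + 1 / Real.sinh (rG x) ^ 2
        + rG x / (2 * t) * ((Real.cosh (rG x) - x.2.2) / Real.sinh (rG x))) := by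
  have rG_ne_zero : rG x ≠ 0 := (rG_pos ha hx).ne'
  have sinh_rG_ne_zero : sinh (rG x) ≠ 0 := sinh_ne_zero.mpr rG_ne_zero
  have X0_eq : X0 (heatK t) x = heatK t x *
      ((1 / rG x - cosh (rG x) / sinh (rG x) - rG x / (2 * t)) *
        ((x.2.2 - cosh (rG x)) / sinh (rG x)) - 1) := by
    rw [heatK_eq_sqrt_deltaG_mul_heatProfile,
      X0_sqrt_deltaG_mul_comp_rG ha hx (hasDerivAt_heatProfile t rG_ne_zero)]
    ring
  have coth_sq : cosh (rG x) ^ 2 / sinh (rG x) ^ 2 - 1 = 1 / sinh (rG x) ^ 2 := by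
    rw [div_sub_one (pow_ne_zero 2 sinh_rG_ne_zero), cosh_sq, add_sub_cancel_left]
  rw [X0_eq, ← coth_sq]
  ring
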